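/- Let n > 1 be an integer, let φ denote the Euler totient function, let d = gcd(n^{φ(n)} - 1, φ(n)), and let m = ∏_{p | d} p^{v_p(n^{φ(n)} - 1)}, the product over primes p dividing d. If cosocle(m) > rad(n), then (1, n^{φ(n)·k} - 1, n^{φ(n)·k}) is an abc triple for each positive integer k. -/

import Mathlib

open scoped Classical

/-- The radical of a natural number: the product of its distinct prime factors. -/
def rad (n : ℕ) : ℕ := ∏ p ∈ n.primeFactors, p

/-- The cosocle of a natural number: `n / rad n`. -/
def cosocle (n : ℕ) : ℕ := n / rad n

/-- `(a, b, c)` is an abc triple: `a, b, c` are relatively prime positive integers with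
`a + b = c` and `rad (a*b*c) < c`. -/
def IsABCTriple (a b c : ℕ) : Prop :=
  0 < a ∧ 0 < b ∧ 0 < c ∧ a + b = c ∧
    Nat.Coprime a b ∧ Nat.Coprime a c ∧ Nat.Coprime b c ∧ rad (a * b * c) < c

theorem rad_pos' (a : ℕ) : 0 < rad a :=
  Finset.prod_pos fun p hp => (Nat.prime_of_mem_primeFactors hp).pos

theorem rad_dvd' (a : ℕ) : rad a ∣ a := Nat.prod_primeFactors_dvd a

theorem rad_mul_le' (a b : ℕ) (ha : a ≠ 0) (hb : b ≠ 0) : rad (a * b) ≤ rad a * rad b := by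
  unfold rad
  rw [Nat.primeFactors_mul ha hb, ← Finset.prod_union_inter]
  refine Nat.le_mul_of_pos_right _ ?_
  refine Finset.prod_pos fun p hp => ?_
  exact (Nat.prime_of_mem_primeFactors (Finset.mem_inter.1 hp).1).pos

theorem stmt_12 (n : ℕ) (hn : 1 < n)
    (d : ℕ) (hd : d = Nat.gcd (n ^ Nat.totient n - 1) (Nat.totient n))
    (m : ℕ)
    (hm : m = ∏ p ∈ d.primeFactors, p ^ padicValNat p (n ^ Nat.totient n - 1))
    (hcos : rad n < cosocle m) :
    ∀ k : ℕ, 0 < k →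
      IsABCTriple 1 (n ^ (Nat.totient n * k) - 1) (n ^ (Nat.totient n * k)) := by
  intro k hk
  have hphi : 0 < Nat.totient n := Nat.totient_pos.2 (by omega)
  have hN1 : 1 < n ^ Nat.totient n := Nat.one_lt_pow hphi.ne' hn
  have hC1 : 1 < n ^ (Nat.totient n * k) := Nat.one_lt_pow (Nat.mul_pos hphi hk).ne' hn
  have hN : n ^ Nat.totient n - 1 ≠ 0 := by omega
  have hmN : m ∣ n ^ Nat.totient n - 1 := by
    rw [hm]
    have h1 : ∏ p ∈ (n ^ Nat.totient n - 1).primeFactors,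
        p ^ padicValNat p (n ^ Nat.totient n - 1) = n ^ Nat.totient n - 1 := by
      conv_rhs => rw [← Nat.prod_factorization_pow_eq_self hN]
      rw [Finsupp.prod, Nat.support_factorization]
      refine Finset.prod_congr rfl fun p hp => ?_
      rw [Nat.factorization_def _ (Nat.prime_of_mem_primeFactors hp)]
    conv_rhs => rw [← h1]
    refine Finset.prod_dvd_prod_of_subset _ _ _ ?_
    refine Nat.primeFactors_mono ?_ hN
    rw [hd]
    exact Nat.gcd_dvd_left _ _
  have hNB : n ^ Nat.totient n - 1 ∣ n ^ (Nat.totient n * k) - 1 :=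
    Nat.pow_sub_one_dvd_pow_sub_one n (Dvd.intro k rfl)
  obtain ⟨q, hq⟩ := hmN.trans hNB
  have hm0 : m ≠ 0 := by rintro rfl; omega
  have hq0 : q ≠ 0 := by rintro rfl; omega
  have hcm : rad m * cosocle m = m := Nat.mul_div_cancel' (rad_dvd' m)
  have hco : Nat.Coprime (n ^ (Nat.totient n * k) - 1) (n ^ (Nat.totient n * k)) := by
    have := (Nat.coprime_self_add_right (m := n ^ (Nat.totient n * k) - 1) (n := 1)).2
      (Nat.coprime_one_right _)
    rwa [Nat.sub_add_cancel hC1.le] at this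
  refine ⟨one_pos, by omega, by omega, by omega, Nat.coprime_one_left _,
    Nat.coprime_one_left _, hco, ?_⟩
  have hradc : rad (n ^ (Nat.totient n * k)) = rad n := by
    unfold rad
    rw [Nat.primeFactors_pow _ (Nat.mul_pos hphi hk).ne']
  rw [one_mul]
  have hB : rad (n ^ (Nat.totient n * k) - 1) ≤ rad m * q := by
    rw [hq]
    exact (rad_mul_le' m q hm0 hq0).trans
      (Nat.mul_le_mul_left _ (Nat.le_of_dvd (Nat.pos_of_ne_zero hq0) (rad_dvd' q)))
  calc rad ((n ^ (Nat.totient n * k) - 1) * n ^ (Nat.totient n * k))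
      ≤ rad (n ^ (Nat.totient n * k) - 1) * rad n := by
        have := rad_mul_le' (n ^ (Nat.totient n * k) - 1) (n ^ (Nat.totient n * k))
          (by omega) (by omega)
        rwa [hradc] at this
    _ ≤ (rad m * q) * cosocle m := Nat.mul_le_mul hB hcos.le
    _ = n ^ (Nat.totient n * k) - 1 := by
        rw [hq]
        conv_rhs => rw [← hcm]
        ring
    _ < n ^ (Nat.totient n * k) := by omega
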